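/- arXiv:1608.03861 — 2 statements merged into one kernel-verified Lean document; each statement's English description precedes it below -/
import Mathlib

section
/- Fix integers N ≥ 1 and 1 ≤ m ≤ N. Define t_0 = 1 and t_{i+1} = (1 + √(1 + 4t_i²))/2 for 0 ≤ i ≤ m−1, and the FPGM-m iterates by y_0 = x_0 and, for i = 0, …, N−1: x_{i+1} = p(y_i), y_{i+1} = x_{i+1} + ((t_i − 1)/t_{i+1})(x_{i+1} − x_i) if i ≤ m−1 and y_{i+1} = x_{i+1} otherwise. Then min_{0 ≤ i ≤ N} ‖∇̃F(x_i)‖ ≤ ‖∇̃F(x_N)‖ ≤ 2LR / ((m+1)√(N−m+1)). -/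
open scoped RealInnerProductSpace

/-!
The whole argument rests on one refined proximal-gradient inequality (`prox_key`): for all `y, z`,
with `q = p y`,
`F z - F q ≥ L⟪y - q, z - y⟫ + L/2 ‖y - q‖² + L/2 ‖q - p q‖²`.
Compared with the usual inequality behind FISTA it has the extra term `L/2 ‖q - p q‖²`; it comes
from using cocoercivity of `f'` instead of the descent lemma, together with the fact that the
composite gradient mapping at `q` is no longer than any subgradient of `F` at `q`.

Its consequences are: the step lengths `‖x - p x‖` do not increase along `p` (take `z = q`), a plain
step from `x` decreases `F` by at least `L/2 ‖x - p x‖² + L/2 ‖p x - p (p x)‖²` (take `z = y = x`),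
and the usual FISTA potential gives
`t_i² (F x_{i+1} - F x_* + L/2 ‖x_{i+1} - p x_{i+1}‖²) ≤ L R² / 2` for every accelerated step.

The momentum formula is still used to form `y_m`, so `x_{m+1}` is an accelerated iterate and, when
`N > m`, only `N - m` plain steps (counting the one from `x_N`) follow it. Each of them counts twice
thanks to the extra term, which gives
`(N - m) L ‖x_N - p x_N‖² ≤ 2 L R² / (m + 2)²`, and this suffices as `2 (N - m) ≥ N - m + 1`. When
`N = m` the bound at `x_m` is enough.
-/

section Aux

variable {E : Type*} [NormedAddCommGroup E] [InnerProductSpace ℝ E]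

lemma hasDerivAt_line {f : E → ℝ} {f' : E → E}
    (hgrad : ∀ z : E, HasFDerivAt f (innerSL ℝ (f' z)) z) (a d : E) (s : ℝ) :
    HasDerivAt (fun s : ℝ => f (a + s • d)) ⟪f' (a + s • d), d⟫ s := by
  have h1 : HasDerivAt (fun s : ℝ => a + s • d) d s := by
    simpa using ((hasDerivAt_id s).smul_const d).const_add a
  exact (hgrad (a + s • d)).comp_hasDerivAt s h1

lemma gradient_ineq {f : E → ℝ} {f' : E → E} (hf : ConvexOn ℝ Set.univ f)
    (hgrad : ∀ z : E, HasFDerivAt f (innerSL ℝ (f' z)) z) (y z : E) :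
    f y + ⟪f' y, z - y⟫ ≤ f z := by
  have hc : ConvexOn ℝ Set.univ (fun s : ℝ => f (y + s • (z - y))) := by
    refine ⟨convex_univ, fun a _ b _ u v hu hv huv => ?_⟩
    have h := hf.2 (Set.mem_univ (y + a • (z - y))) (Set.mem_univ (y + b • (z - y))) hu hv huv
    have e : y + (u • a + v • b) • (z - y)
        = u • (y + a • (z - y)) + v • (y + b • (z - y)) := by
      obtain rfl : v = 1 - u := by linarith
      simp only [smul_eq_mul]
      module
    simpa only [e] using h
  have hd := hasDerivAt_line hgrad y (z - y) 0
  have h := hc.le_slope_of_hasDerivAt (Set.mem_univ 0) (Set.mem_univ 1) one_pos hd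
  simp [slope_def_field] at h
  linarith

lemma descent_lemma {L : ℝ} {f : E → ℝ} {f' : E → E}
    (hgrad : ∀ z : E, HasFDerivAt f (innerSL ℝ (f' z)) z)
    (hLip : ∀ u v : E, ‖f' u - f' v‖ ≤ L * ‖u - v‖) (a d : E) :
    f (a + d) ≤ f a + ⟪f' a, d⟫ + L / 2 * ‖d‖ ^ 2 := by
  have hd : ∀ s : ℝ, HasDerivAt
      (fun s : ℝ => f (a + s • d) - s * ⟪f' a, d⟫ - s ^ 2 * (L / 2 * ‖d‖ ^ 2))
      (⟪f' (a + s • d), d⟫ - ⟪f' a, d⟫ - 2 * s * (L / 2 * ‖d‖ ^ 2)) s := by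
    intro s
    have h2 := (hasDerivAt_id s).mul_const ⟪f' a, d⟫
    have h3 := (hasDerivAt_pow 2 s).mul_const (L / 2 * ‖d‖ ^ 2)
    have h := ((hasDerivAt_line hgrad a d s).sub h2).sub h3
    refine h.congr_deriv ?_
    simp
  have hanti : AntitoneOn
      (fun s : ℝ => f (a + s • d) - s * ⟪f' a, d⟫ - s ^ 2 * (L / 2 * ‖d‖ ^ 2))
      (Set.Icc 0 1) := by
    refine antitoneOn_of_deriv_nonpos (convex_Icc 0 1)
      (fun s _ => (hd s).continuousAt.continuousWithinAt)
      (fun s _ => (hd s).differentiableAt.differentiableWithinAt) ?_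
    intro s hs
    rw [interior_Icc] at hs
    rw [(hd s).deriv]
    have h1 : ⟪f' (a + s • d) - f' a, d⟫ ≤ ‖f' (a + s • d) - f' a‖ * ‖d‖ :=
      real_inner_le_norm _ _
    have h2 := hLip (a + s • d) a
    rw [add_sub_cancel_left, norm_smul, Real.norm_eq_abs, abs_of_pos hs.1] at h2
    have h3 := mul_le_mul_of_nonneg_right h2 (norm_nonneg d)
    rw [inner_sub_left] at h1
    nlinarith
  have h := hanti (Set.left_mem_Icc.2 zero_le_one) (Set.right_mem_Icc.2 zero_le_one) zero_le_one
  simp at h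
  linarith

/-- The interpolation (cocoercivity) inequality for convex functions with Lipschitz gradient. -/
lemma cocoercive_ineq {L : ℝ} (hL : 0 < L) {f : E → ℝ} {f' : E → E}
    (hf : ConvexOn ℝ Set.univ f)
    (hgrad : ∀ z : E, HasFDerivAt f (innerSL ℝ (f' z)) z)
    (hLip : ∀ u v : E, ‖f' u - f' v‖ ≤ L * ‖u - v‖) (a b : E) :
    f b + ⟪f' b, a - b⟫ + 1 / (2 * L) * ‖f' a - f' b‖ ^ 2 ≤ f a := by
  -- Compare both bounds at the gradient step of `f - ⟪f' b, ·⟫` from `a`.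
  have h1 := descent_lemma hgrad hLip a (-(1 / L) • (f' a - f' b))
  have h2 := gradient_ineq hf hgrad b (a + -(1 / L) • (f' a - f' b))
  have e : a + -(1 / L) • (f' a - f' b) - b = (a - b) + -(1 / L) • (f' a - f' b) := by abel
  rw [e, inner_add_right, inner_smul_right] at h2
  rw [inner_smul_right, norm_smul, mul_pow, Real.norm_eq_abs, sq_abs] at h1
  have e2 : ⟪f' a, f' a - f' b⟫ - ⟪f' b, f' a - f' b⟫ = ‖f' a - f' b‖ ^ 2 := by
    rw [← inner_sub_left, real_inner_self_eq_norm_sq]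
  have e3 : L / 2 * ((-(1 / L)) ^ 2 * ‖f' a - f' b‖ ^ 2)
      = 1 / (2 * L) * ‖f' a - f' b‖ ^ 2 := by
    field_simp
  have e4 : 1 / L * ‖f' a - f' b‖ ^ 2
      = 1 / (2 * L) * ‖f' a - f' b‖ ^ 2 + 1 / (2 * L) * ‖f' a - f' b‖ ^ 2 := by
    field_simp
    ring
  rw [← e2] at e4
  rw [e3] at h1
  rw [← e2] at h1 ⊢
  linarith

/-- Optimality of the proximal step: `L (y - p y) - f' y` is a subgradient of `φ` at `p y`. -/
lemma prox_subgrad {L : ℝ} {f : E → ℝ} {f' : E → E} {φ : E → ℝ}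
    (hφ : ConvexOn ℝ Set.univ φ) {p : E → E}
    (hp : ∀ y : E, IsMinOn
      (fun z => f y + ⟪f' y, z - y⟫ + L / 2 * ‖z - y‖ ^ 2 + φ z) Set.univ (p y))
    (y z : E) :
    φ (p y) + ⟪L • (y - p y) - f' y, z - p y⟫ ≤ φ z := by
  -- Test minimality at `p y + s (z - p y)`, divide by `s` and let `s` tend to `0`.
  have key : ∀ s : ℝ, 0 < s → s ≤ 1 →
      0 ≤ (φ z - φ (p y) - ⟪L • (y - p y) - f' y, z - p y⟫)
        + s * (L / 2 * ‖z - p y‖ ^ 2) := by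
    intro s hs hs1
    have h := isMinOn_univ_iff.1 (hp y) (p y + s • (z - p y))
    have hc := hφ.2 (Set.mem_univ (p y)) (Set.mem_univ z) (sub_nonneg.2 hs1) hs.le
      (sub_add_cancel 1 s)
    have e : (1 - s) • p y + s • z = p y + s • (z - p y) := by module
    rw [e, smul_eq_mul, smul_eq_mul] at hc
    have e2 : p y + s • (z - p y) - y = (p y - y) + s • (z - p y) := by abel
    simp only [e2] at h
    rw [norm_add_sq_real, inner_add_right, inner_smul_right, inner_smul_right, norm_smul,
      mul_pow, Real.norm_eq_abs, sq_abs] at h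
    have e3 : ⟪L • (y - p y) - f' y, z - p y⟫
        = -(L * ⟪p y - y, z - p y⟫) - ⟪f' y, z - p y⟫ := by
      rw [inner_sub_left, real_inner_smul_left, ← neg_sub (p y) y, inner_neg_left]
      ring
    rw [e3]
    refine nonneg_of_mul_nonneg_right ?_ hs
    nlinarith
  by_contra hcon
  push Not at hcon
  set A := φ z - φ (p y) - ⟪L • (y - p y) - f' y, z - p y⟫ with hA
  have hA0 : A < 0 := by rw [hA]; linarith
  have hlim : Filter.Tendsto (fun s : ℝ => A + s * (L / 2 * ‖z - p y‖ ^ 2))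
      (nhdsWithin 0 (Set.Ioi 0)) (nhds A) := by
    have : Continuous (fun s : ℝ => A + s * (L / 2 * ‖z - p y‖ ^ 2)) := by fun_prop
    simpa using (this.tendsto 0).mono_left nhdsWithin_le_nhds
  have : 0 ≤ A := by
    refine ge_of_tendsto hlim ?_
    filter_upwards [Ioc_mem_nhdsGT (zero_lt_one' ℝ)] with s hs
    exact key s hs.1 hs.2
  linarith

/-- The refined proximal-gradient inequality. The term `L / 2 * ‖p y - p (p y)‖ ^ 2` is the gain
over the inequality used in the classical analysis of FISTA. -/
lemma prox_key {L : ℝ} (hL : 0 < L) {f : E → ℝ} {f' : E → E} {φ : E → ℝ}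
    (hf : ConvexOn ℝ Set.univ f)
    (hgrad : ∀ z : E, HasFDerivAt f (innerSL ℝ (f' z)) z)
    (hLip : ∀ u v : E, ‖f' u - f' v‖ ≤ L * ‖u - v‖)
    (hφ : ConvexOn ℝ Set.univ φ) {p : E → E}
    (hp : ∀ y : E, IsMinOn
      (fun z => f y + ⟪f' y, z - y⟫ + L / 2 * ‖z - y‖ ^ 2 + φ z) Set.univ (p y))
    (y z : E) :
    f (p y) + φ (p y) + L * ⟪y - p y, z - y⟫ + L / 2 * ‖y - p y‖ ^ 2
      + L / 2 * ‖p y - p (p y)‖ ^ 2 ≤ f z + φ z := by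
  have h1 := gradient_ineq hf hgrad y z
  have h2 := cocoercive_ineq hL hf hgrad hLip y (p y)
  have h3 := prox_subgrad hφ hp y z
  have h4 := prox_subgrad hφ hp y (p (p y))
  have h5 := prox_subgrad hφ hp (p y) (p y)
  set q := p y
  set e := q - p q with he
  -- Monotonicity of the subdifferential of `φ` between `q` and `p q`; here
  -- `L • (y - q) - (f' y - f' q)` is a subgradient of `F` at `q`.
  have h6 : L * ‖e‖ ^ 2 ≤ ⟪L • (y - q) - (f' y - f' q), e⟫ := by
    have e1 : p q - q = -e := by rw [he]; abel
    rw [e1, inner_neg_right] at h4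
    rw [inner_sub_left, real_inner_smul_left, real_inner_self_eq_norm_sq] at h5
    rw [inner_sub_left] at h4 ⊢
    rw [inner_sub_left]
    linarith
  have h7 : L ^ 2 * ‖e‖ ^ 2 ≤ ‖L • (y - q) - (f' y - f' q)‖ ^ 2 := by
    have h := norm_sub_sq_real (L • (y - q) - (f' y - f' q)) (L • e)
    rw [inner_smul_right, norm_smul, mul_pow, Real.norm_eq_abs, sq_abs] at h
    nlinarith [sq_nonneg ‖L • (y - q) - (f' y - f' q) - L • e‖]
  rw [norm_sub_sq_real (L • (y - q)), norm_smul, mul_pow, Real.norm_eq_abs, sq_abs,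
    real_inner_smul_left] at h7
  have h8 : L / 2 * ‖e‖ ^ 2 ≤ L / 2 * ‖y - q‖ ^ 2 - ⟪y - q, f' y - f' q⟫
      + 1 / (2 * L) * ‖f' y - f' q‖ ^ 2 := by
    have : 0 < 2 * L := by positivity
    rw [← mul_le_mul_iff_right₀ this]
    have e1 : 2 * L * (L / 2 * ‖y - q‖ ^ 2 - ⟪y - q, f' y - f' q⟫
        + 1 / (2 * L) * ‖f' y - f' q‖ ^ 2) = L ^ 2 * ‖y - q‖ ^ 2
        - 2 * (L * ⟪y - q, f' y - f' q⟫) + ‖f' y - f' q‖ ^ 2 := by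
      field_simp
    rw [e1]
    linarith
  have e2 : z - q = (z - y) + (y - q) := by abel
  rw [e2, inner_sub_left, real_inner_smul_left, inner_add_right, inner_add_right,
    real_inner_self_eq_norm_sq] at h3
  rw [real_inner_comm, inner_sub_left] at h8
  linarith

/-- One accelerated step decreases the FISTA potential: `prox_key` at `x` with weight `τ - 1` plus
`prox_key` at `x_*` with weight `1`, all multiplied by `τ`. -/
lemma fista_step {L : ℝ} (F : E → ℝ) (p : E → E)
    (key : ∀ y z : E, F (p y) + L * ⟪y - p y, z - y⟫ + L / 2 * ‖y - p y‖ ^ 2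
      + L / 2 * ‖p y - p (p y)‖ ^ 2 ≤ F z)
    (τ : ℝ) (hτ : 1 ≤ τ) (x y xs : E) :
    τ ^ 2 * (F (p y) - F xs + L / 2 * ‖p y - p (p y)‖ ^ 2)
      + L / 2 * ‖τ • p y - (τ - 1) • x - xs‖ ^ 2
      ≤ τ * (τ - 1) * (F x - F xs) + L / 2 * ‖τ • y - (τ - 1) • x - xs‖ ^ 2 := by
  have h1 := mul_le_mul_of_nonneg_left (key y x)
    (mul_nonneg (by linarith : (0 : ℝ) ≤ τ) (sub_nonneg.2 hτ))
  have h2 := mul_le_mul_of_nonneg_left (key y xs) (by linarith : (0 : ℝ) ≤ τ)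
  have e1 : τ • p y - (τ - 1) • x - xs
      = (τ • y - (τ - 1) • x - xs) - τ • (y - p y) := by module
  have e2 : τ • y - (τ - 1) • x - xs = -((τ - 1) • (x - y) + (xs - y)) := by module
  have e3 : ⟪τ • y - (τ - 1) • x - xs, y - p y⟫
      = -((τ - 1) * ⟪y - p y, x - y⟫ + ⟪y - p y, xs - y⟫) := by
    rw [e2, inner_neg_left, inner_add_left, real_inner_smul_left, real_inner_comm,
      real_inner_comm (y - p y) (xs - y)]
  rw [e1, norm_sub_sq_real _ (τ • (y - p y)), inner_smul_right, e3, norm_smul, mul_pow, Real.norm_eq_abs, sq_abs]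
  linarith

end Aux

/-- FPGM-m satisfies
min_{0≤i≤N} ‖∇̃F(x_i)‖ ≤ ‖∇̃F(x_N)‖ ≤ 2LR/((m+1)√(N−m+1)). -/
theorem fpgm_m_cgm_bound
    {E : Type*} [NormedAddCommGroup E] [InnerProductSpace ℝ E]
    (L : ℝ) (hL : 0 < L)
    (f : E → ℝ) (f' : E → E) (φ : E → ℝ)
    (hf : ConvexOn ℝ Set.univ f)
    (hgrad : ∀ z : E, HasFDerivAt f (innerSL ℝ (f' z)) z)
    (hLip : ∀ u v : E, ‖f' u - f' v‖ ≤ L * ‖u - v‖)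
    (hφ : ConvexOn ℝ Set.univ φ)
    (p : E → E)
    (hp : ∀ y : E, IsMinOn
      (fun z => f y + ⟪f' y, z - y⟫ + L / 2 * ‖z - y‖ ^ 2 + φ z) Set.univ (p y))
    (xs : E) (hxs : IsMinOn (fun z => f z + φ z) Set.univ xs)
    (R : ℝ) (hR0 : 0 ≤ R)
    (N m : ℕ) (hm1 : 1 ≤ m) (hmN : m ≤ N)
    (t : ℕ → ℝ) (ht0 : t 0 = 1)
    (ht : ∀ i < m, t (i + 1) = (1 + Real.sqrt (1 + 4 * t i ^ 2)) / 2)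
    (x y : ℕ → E) (hR : ‖x 0 - xs‖ ≤ R)
    (hy0 : y 0 = x 0)
    (hx : ∀ i < N, x (i + 1) = p (y i))
    (hy1 : ∀ i < N, i < m →
      y (i + 1) = x (i + 1) + ((t i - 1) / t (i + 1)) • (x (i + 1) - x i))
    (hy2 : ∀ i < N, m ≤ i → y (i + 1) = x (i + 1)) :
    (Finset.range (N + 1)).inf' (Finset.nonempty_range_iff.mpr (Nat.succ_ne_zero N))
        (fun i => L * ‖x i - p (x i)‖) ≤ L * ‖x N - p (x N)‖ ∧
      L * ‖x N - p (x N)‖ ≤ 2 * L * R / (((m : ℝ) + 1) * Real.sqrt ((N : ℝ) - m + 1)) := by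
  have key : ∀ y z : E, (f (p y) + φ (p y)) + L * ⟪y - p y, z - y⟫ + L / 2 * ‖y - p y‖ ^ 2
      + L / 2 * ‖p y - p (p y)‖ ^ 2 ≤ f z + φ z :=
    fun y z => prox_key hL hf hgrad hLip hφ hp y z
  obtain ⟨F, hF⟩ : ∃ F : E → ℝ, F = fun z => f z + φ z := ⟨_, rfl⟩
  replace key : ∀ y z : E, F (p y) + L * ⟪y - p y, z - y⟫ + L / 2 * ‖y - p y‖ ^ 2
      + L / 2 * ‖p y - p (p y)‖ ^ 2 ≤ F z := by simpa only [hF] using key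
  have hmin : ∀ z, F xs ≤ F z := by
    rw [hF]
    exact isMinOn_univ_iff.1 hxs
  have hdec : ∀ z, F (p z) + L / 2 * ‖z - p z‖ ^ 2 + L / 2 * ‖p z - p (p z)‖ ^ 2 ≤ F z := by
    intro z
    simpa using key z z
  have hmono : ∀ z, L / 2 * ‖p z - p (p z)‖ ^ 2 ≤ L / 2 * ‖z - p z‖ ^ 2 := by
    intro z
    have h := key z (p z)
    rw [← neg_sub z (p z), inner_neg_right, real_inner_self_eq_norm_sq] at h
    linarith
  have htpos : ∀ i ≤ m, ((i : ℝ) + 2) / 2 ≤ t i := by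
    intro i
    induction i with
    | zero => intro _; simp [ht0]
    | succ k ih =>
      intro hk
      have h := ih (by omega)
      have h0 : (0 : ℝ) ≤ k := Nat.cast_nonneg k
      have hs : 2 * t k ≤ Real.sqrt (1 + 4 * t k ^ 2) :=
        Real.le_sqrt_of_sq_le (by nlinarith)
      rw [ht k (by omega)]
      push_cast
      linarith
  have ht1 : ∀ i ≤ m, 1 ≤ t i := by
    intro i hi
    have h0 : (0 : ℝ) ≤ i := Nat.cast_nonneg i
    linarith [htpos i hi]
  have htrec : ∀ i < m, t (i + 1) * (t (i + 1) - 1) = t i ^ 2 := by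
    intro i hi
    have hs := Real.sq_sqrt (by positivity : (0 : ℝ) ≤ 1 + 4 * t i ^ 2)
    rw [ht i hi]
    nlinarith
  have hpot : ∀ i ≤ m, i < N →
      t i ^ 2 * (F (x (i + 1)) - F xs + L / 2 * ‖x (i + 1) - p (x (i + 1))‖ ^ 2)
        + L / 2 * ‖t i • x (i + 1) - (t i - 1) • x i - xs‖ ^ 2 ≤ L / 2 * R ^ 2 := by
    intro i
    induction i with
    | zero =>
      intro _ hN
      have h := fista_step F p key (t 0) (ht1 0 (Nat.zero_le _)) (x 0) (y 0) xs
      rw [← hx 0 hN, hy0, ht0] at h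
      rw [ht0]
      have h2 : L / 2 * ‖x 0 - xs‖ ^ 2 ≤ L / 2 * R ^ 2 := by gcongr
      simp only [sub_self, zero_smul, one_smul, sub_zero] at h ⊢
      linarith
    | succ k ih =>
      intro hk hN
      have h0 := ih (by omega) (by omega)
      have h := fista_step F p key (t (k + 1)) (ht1 _ hk) (x (k + 1)) (y (k + 1)) xs
      rw [← hx (k + 1) hN, htrec k (by omega)] at h
      have hne : t (k + 1) ≠ 0 := by linarith [ht1 _ hk]
      -- The momentum coefficient is chosen so that consecutive potentials match.
      have e : t (k + 1) • y (k + 1) - (t (k + 1) - 1) • x (k + 1) - xs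
          = t k • x (k + 1) - (t k - 1) • x k - xs := by
        rw [hy1 k (by omega) (by omega), smul_add, smul_smul, mul_div_cancel₀ _ hne]
        module
      rw [e] at h
      have h3 : 0 ≤ t k ^ 2 * (L / 2 * ‖x (k + 1) - p (x (k + 1))‖ ^ 2) := by positivity
      linarith
  have hacc : ∀ i ≤ m, i < N →
      (((i : ℝ) + 2) / 2) ^ 2
        * (F (x (i + 1)) - F xs + L / 2 * ‖x (i + 1) - p (x (i + 1))‖ ^ 2)
        ≤ L / 2 * R ^ 2 := by
    intro i hi hN
    have h := hpot i hi hN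
    have h2 : 0 ≤ L / 2 * ‖t i • x (i + 1) - (t i - 1) • x i - xs‖ ^ 2 := by positivity
    have h3 : 0 ≤ F (x (i + 1)) - F xs + L / 2 * ‖x (i + 1) - p (x (i + 1))‖ ^ 2 :=
      add_nonneg (sub_nonneg.2 (hmin _)) (by positivity)
    have h4 : (((i : ℝ) + 2) / 2) ^ 2 ≤ t i ^ 2 := by
      have := htpos i hi
      gcongr
    linarith [mul_le_mul_of_nonneg_right h4 h3]
  have hplain : ∀ k : ℕ, m + 1 + k ≤ N →
      F (x (m + 1 + k)) - F xs
        + (2 * k + 1) * (L / 2 * ‖x (m + 1 + k) - p (x (m + 1 + k))‖ ^ 2)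
      ≤ F (x (m + 1)) - F xs + L / 2 * ‖x (m + 1) - p (x (m + 1))‖ ^ 2 := by
    intro k
    induction k with
    | zero => intro _; simp
    | succ k ih =>
      intro hk
      have h := ih (by omega)
      have e : x (m + 1 + (k + 1)) = p (x (m + 1 + k)) := by
        rw [← add_assoc, hx (m + 1 + k) (by omega), add_right_comm m 1 k,
          hy2 (m + k) (by omega) (by omega)]
      rw [e]
      have h1 := hdec (x (m + 1 + k))
      have h2 := mul_le_mul_of_nonneg_left (hmono (x (m + 1 + k)))
        (by positivity : (0 : ℝ) ≤ 2 * k + 2)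
      push_cast
      linarith
  have hlast : L / 2 * ‖x N - p (x N)‖ ^ 2 ≤ F (x N) - F xs := by
    have h1 := hdec (x N)
    have h2 := hmin (p (x N))
    have h3 : 0 ≤ L / 2 * ‖p (x N) - p (p (x N))‖ ^ 2 := by positivity
    linarith
  have hm0 : (0 : ℝ) < m := by exact_mod_cast hm1
  have hNm : (0 : ℝ) ≤ (N : ℝ) - m := sub_nonneg.2 (by exact_mod_cast hmN)
  have hmain : ((m : ℝ) + 1) ^ 2 * ((N : ℝ) - m + 1) * ‖x N - p (x N)‖ ^ 2 ≤ 4 * R ^ 2 := by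
    have hD : 0 ≤ ‖x N - p (x N)‖ ^ 2 := by positivity
    refine le_of_mul_le_mul_left ?_ (by positivity : 0 < L / 8)
    rcases hmN.eq_or_lt with rfl | hlt
    · have h := hacc (m - 1) (by omega) (by omega)
      rw [Nat.sub_add_cancel hm1, Nat.cast_sub hm1, Nat.cast_one] at h
      have h2 : L / 2 * ‖x m - p (x m)‖ ^ 2
          ≤ F (x m) - F xs + L / 2 * ‖x m - p (x m)‖ ^ 2 := by linarith [hmin (x m)]
      have h3 := mul_le_mul_of_nonneg_left h2
        (by positivity : (0 : ℝ) ≤ (((m : ℝ) - 1 + 2) / 2) ^ 2)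
      have e : L / 8 * (((m : ℝ) + 1) ^ 2 * ((m : ℝ) - m + 1) * ‖x m - p (x m)‖ ^ 2)
          = (((m : ℝ) - 1 + 2) / 2) ^ 2 * (L / 2 * ‖x m - p (x m)‖ ^ 2) := by ring
      rw [e]
      linarith
    · obtain ⟨k, rfl⟩ : ∃ k, N = m + 1 + k := ⟨N - (m + 1), by omega⟩
      have h := hacc m le_rfl hlt
      have h1 := hplain k le_rfl
      set D := ‖x (m + 1 + k) - p (x (m + 1 + k))‖ ^ 2
      have h2 : (2 * (k : ℝ) + 2) * (L / 2 * D)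
          ≤ F (x (m + 1)) - F xs + L / 2 * ‖x (m + 1) - p (x (m + 1))‖ ^ 2 := by linarith
      have h3 := mul_le_mul_of_nonneg_left h2
        (by positivity : (0 : ℝ) ≤ (((m : ℝ) + 2) / 2) ^ 2)
      have h4 : ((m : ℝ) + 1) ^ 2 * ((k : ℝ) + 2) * (L / 8 * D)
          ≤ ((m : ℝ) + 2) ^ 2 * (2 * (k : ℝ) + 2) * (L / 8 * D) := by
        have hk0 : (0 : ℝ) ≤ k := Nat.cast_nonneg k
        gcongr <;> linarith
      push_cast
      linarith
  refine ⟨Finset.inf'_le _ (Finset.mem_range.2 (Nat.lt_succ_self N)), ?_⟩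
  rw [le_div_iff₀ (by positivity)]
  have hfin : ‖x N - p (x N)‖ * (((m : ℝ) + 1) * Real.sqrt ((N : ℝ) - m + 1)) ≤ 2 * R := by
    refine abs_le_of_sq_le_sq' ?_ (by positivity) |>.2
    rw [mul_pow, mul_pow, Real.sq_sqrt (by linarith)]
    linarith
  nlinarith
end

section
/- For the FPGM-OPG iterates (GFPGM run with the FPGM-OPG parameters), for every N ≥ 1, F(x_N) − F(x_*) ≤ 4 L R² / (N(N + 4)). -/
open scoped RealInnerProductSpace

/-!
The bound combines an energy estimate for the generalized fast proximal gradient method with a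
lower bound on the parameter sum `T (N - 1)`.

Convexity of `f` and `φ`, the descent lemma and the optimality condition of the proximal step give
`F (p y) - F z ≤ L ⟪p y - y, z - y⟫ - L / 2 ‖p y - y‖²` for all `y` and `z` (`prox_grad_ineq`).
Adding this at `y = y i` for `z = x i` with weight `T i - t i` and for `z = xs` with weight `t i`,
and using `t i ^ 2 ≤ T i`, the right-hand side becomes the telescoping difference
`L / 2 (‖u i - xs‖² - ‖u (i + 1) - xs‖²)`, where `t i • u i = T i • y i - (T i - t i) • x i`; the
momentum coefficients are exactly those for which `u (i + 1) = u i + t i • (x (i + 1) - y i)`.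
Hence `F (x N) - F xs ≤ L ‖x 0 - xs‖² / (2 T (N - 1))` (`gfpgm_energy`).

Let `m = ⌈N / 2⌉`. On the first half the FISTA recursion gives `T i = t i ^ 2` and
`t i ≥ (i + 2) / 2`, so `T (m - 1) ≥ ((m + 1) / 2)²`. On the second half the parameters stay below
`(m + 1) / 2`, so `t i ^ 2 ≤ T i` persists, and summing the arithmetic progression gives
`T (N - 1) ≥ N (N + 4) / 8`.
-/

section ProximalGradient

variable {E : Type*} [NormedAddCommGroup E] [InnerProductSpace ℝ E]

lemma hasDerivAt_along_line {f : E → ℝ} {f' : E → E}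
    (hgrad : ∀ z : E, HasFDerivAt f (innerSL ℝ (f' z)) z) (y d : E) (s : ℝ) :
    HasDerivAt (fun s : ℝ => f (y + s • d)) ⟪f' (y + s • d), d⟫ s := by
  have h1 : HasDerivAt (fun s : ℝ => y + s • d) d s := by
    simpa using ((hasDerivAt_id s).smul_const d).const_add y
  exact (hgrad (y + s • d)).comp_hasDerivAt s h1

lemma convex_gradient_ineq {f : E → ℝ} {f' : E → E} (hf : ConvexOn ℝ Set.univ f)
    (hgrad : ∀ z : E, HasFDerivAt f (innerSL ℝ (f' z)) z) (y w : E) :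
    f y + ⟪f' y, w - y⟫ ≤ f w := by
  have hc : ConvexOn ℝ Set.univ (fun s : ℝ => f (y + s • (w - y))) := by
    have := hf.comp_affineMap (AffineMap.lineMap y w : ℝ →ᵃ[ℝ] E)
    simpa [Function.comp_def, AffineMap.lineMap_apply, add_comm] using this
  have hd := hasDerivAt_along_line hgrad y (w - y) 0
  have := hc.le_slope_of_hasDerivAt (Set.mem_univ 0) (Set.mem_univ 1) zero_lt_one hd
  simp [slope_def_field] at this
  linarith

lemma descent_ineq {L : ℝ} {f : E → ℝ} {f' : E → E}
    (hgrad : ∀ z : E, HasFDerivAt f (innerSL ℝ (f' z)) z)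
    (hLip : ∀ u v : E, ‖f' u - f' v‖ ≤ L * ‖u - v‖) (y w : E) :
    f w ≤ f y + ⟪f' y, w - y⟫ + L / 2 * ‖w - y‖ ^ 2 := by
  set d := w - y with hd
  -- The gap between `f` and its quadratic upper model decreases along the segment from `y` to `w`.
  have hder : ∀ s : ℝ, HasDerivAt
      (fun s : ℝ => f (y + s • d) - (s * ⟪f' y, d⟫ + s ^ 2 * (L / 2 * ‖d‖ ^ 2)))
      (⟪f' (y + s • d), d⟫ - (⟪f' y, d⟫ + 2 * s * (L / 2 * ‖d‖ ^ 2))) s := by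
    intro s
    have h2 := (hasDerivAt_id s).mul_const ⟪f' y, d⟫
    have h3 := ((hasDerivAt_id s).pow 2).mul_const (L / 2 * ‖d‖ ^ 2)
    have h4 := (hasDerivAt_along_line hgrad y d s).sub (h2.add h3)
    exact h4.congr_deriv (by simp)
  have hanti : AntitoneOn
      (fun s : ℝ => f (y + s • d) - (s * ⟪f' y, d⟫ + s ^ 2 * (L / 2 * ‖d‖ ^ 2)))
      (Set.Icc 0 1) := by
    refine antitoneOn_of_deriv_nonpos (convex_Icc 0 1)
      (fun s _ => (hder s).continuousAt.continuousWithinAt)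
      (fun s _ => (hder s).differentiableAt.differentiableWithinAt) ?_
    intro s hs
    rw [interior_Icc] at hs
    rw [(hder s).deriv]
    have h1 : ⟪f' (y + s • d) - f' y, d⟫ ≤ ‖f' (y + s • d) - f' y‖ * ‖d‖ :=
      real_inner_le_norm _ _
    have h2 : ‖f' (y + s • d) - f' y‖ ≤ L * (s * ‖d‖) := by
      have := hLip (y + s • d) y
      rwa [add_sub_cancel_left, norm_smul, Real.norm_of_nonneg hs.1.le] at this
    have h3 := mul_le_mul_of_nonneg_right h2 (norm_nonneg d)
    rw [inner_sub_left] at h1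
    nlinarith
  have h := hanti (Set.left_mem_Icc.2 zero_le_one) (Set.right_mem_Icc.2 zero_le_one) zero_le_one
  have hw : y + d = w := by rw [hd]; abel
  simp [hw] at h
  linarith

/-- Optimality of the proximal step: `-f' y - L (q - y)` is a subgradient of `φ` at the minimizer
`q` of the proximal model at `y`. -/
lemma prox_optimality {L : ℝ} {c : ℝ} {v y q : E} {φ : E → ℝ} (hφ : ConvexOn ℝ Set.univ φ)
    (hq : IsMinOn (fun z => c + ⟪v, z - y⟫ + L / 2 * ‖z - y‖ ^ 2 + φ z) Set.univ q) (z : E) :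
    φ q ≤ φ z + ⟪v, z - q⟫ + L * ⟪q - y, z - q⟫ := by
  -- Compare `q` with `q + s (z - q)`, divide by `s` and let `s` tend to zero.
  have key : ∀ s : ℝ, 0 < s → s ≤ 1 →
      0 ≤ φ z - φ q + ⟪v, z - q⟫ + L * ⟪q - y, z - q⟫ + s * (L / 2 * ‖z - q‖ ^ 2) := by
    intro s hs hs1
    have h1 := hq (Set.mem_univ (q + s • (z - q)))
    have h2 : φ (q + s • (z - q)) ≤ (1 - s) * φ q + s * φ z := by
      have := hφ.2 (Set.mem_univ q) (Set.mem_univ z) (sub_nonneg.2 hs1) hs.le (by ring)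
      have e : (1 - s) • q + s • z = q + s • (z - q) := by module
      simpa [e] using this
    have e : q + s • (z - q) - y = (q - y) + s • (z - q) := by abel
    simp only [Set.mem_ofPred_eq, e, norm_add_sq_real, inner_add_right, inner_smul_right,
      norm_smul, Real.norm_of_nonneg hs.le] at h1
    have h3 : 0 ≤ s * (φ z - φ q + ⟪v, z - q⟫ + L * ⟪q - y, z - q⟫
        + s * (L / 2 * ‖z - q‖ ^ 2)) := by nlinarith
    exact nonneg_of_mul_nonneg_right h3 hs
  have hlim : Filter.Tendsto (fun s : ℝ =>
      φ z - φ q + ⟪v, z - q⟫ + L * ⟪q - y, z - q⟫ + s * (L / 2 * ‖z - q‖ ^ 2))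
      (nhdsWithin 0 (Set.Ioi 0))
      (nhds (φ z - φ q + ⟪v, z - q⟫ + L * ⟪q - y, z - q⟫ + 0 * (L / 2 * ‖z - q‖ ^ 2))) := by
    apply Filter.Tendsto.mono_left _ nhdsWithin_le_nhds
    exact Continuous.tendsto (by fun_prop) 0
  have := ge_of_tendsto hlim (by
    filter_upwards [Ioc_mem_nhdsGT (zero_lt_one (α := ℝ))] with s hs using key s hs.1 hs.2)
  linarith

/-- The fundamental inequality of one proximal gradient step `y ↦ q`, against any point `z`. -/
lemma prox_grad_ineq {L : ℝ} {f : E → ℝ} {f' : E → E} {φ : E → ℝ}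
    (hf : ConvexOn ℝ Set.univ f)
    (hgrad : ∀ z : E, HasFDerivAt f (innerSL ℝ (f' z)) z)
    (hLip : ∀ u v : E, ‖f' u - f' v‖ ≤ L * ‖u - v‖)
    (hφ : ConvexOn ℝ Set.univ φ) {y q : E}
    (hq : IsMinOn (fun z => f y + ⟪f' y, z - y⟫ + L / 2 * ‖z - y‖ ^ 2 + φ z) Set.univ q)
    (z : E) :
    f q + φ q - (f z + φ z) ≤ L * ⟪q - y, z - y⟫ - L / 2 * ‖q - y‖ ^ 2 := by
  have h1 := descent_ineq hgrad hLip y q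
  have h2 := convex_gradient_ineq hf hgrad y z
  have h3 := prox_optimality hφ hq z
  have e : z - q = (z - y) - (q - y) := by abel
  rw [e, inner_sub_right _ (z - y), inner_sub_right _ (z - y), real_inner_self_eq_norm_sq] at h3
  linarith

/-- One step of the energy argument. Here `a = t i`, `S = T i`, `q = x (i + 1)`, and `u` is the
auxiliary point with `a u = S y - (S - a) x`. -/
lemma energy_step {L a S A B C : ℝ} {x y q u xs : E} (hL : 0 < L) (ha : 0 < a) (haS : a ≤ S)
    (hS : a ^ 2 ≤ S) (hu : a • u = S • y - (S - a) • x)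
    (h1 : A - B ≤ L * ⟪q - y, x - y⟫ - L / 2 * ‖q - y‖ ^ 2)
    (h2 : A - C ≤ L * ⟪q - y, xs - y⟫ - L / 2 * ‖q - y‖ ^ 2) :
    S * (A - C) + L / 2 * ‖u + a • (q - y) - xs‖ ^ 2
      ≤ (S - a) * (B - C) + L / 2 * ‖u - xs‖ ^ 2 := by
  have h3 := mul_le_mul_of_nonneg_left h1 (sub_nonneg.2 haS)
  have h4 := mul_le_mul_of_nonneg_left h2 ha.le
  have e1 : (S - a) • (x - y) + a • (xs - y) = -(a • (u - xs)) := by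
    rw [smul_sub a u xs, hu]; module
  have e2 : (S - a) * ⟪q - y, x - y⟫ + a * ⟪q - y, xs - y⟫ = -(a * ⟪u - xs, q - y⟫) := by
    rw [← inner_smul_right, ← inner_smul_right, ← inner_add_right, e1, inner_neg_right,
      inner_smul_right, real_inner_comm]
  have e3 : u + a • (q - y) - xs = (u - xs) + a • (q - y) := by abel
  have e4 : ‖u + a • (q - y) - xs‖ ^ 2
      = ‖u - xs‖ ^ 2 + 2 * (a * ⟪u - xs, q - y⟫) + a ^ 2 * ‖q - y‖ ^ 2 := by
    rw [e3, norm_add_sq_real, inner_smul_right, norm_smul, mul_pow, Real.norm_of_nonneg ha.le]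
  have h5 := mul_le_mul_of_nonneg_right hS (sq_nonneg ‖q - y‖)
  have h6 := mul_le_mul_of_nonneg_left h5 (half_pos hL).le
  rw [e4]
  linear_combination h3 + h4 + h6 + L * e2

/-- Energy estimate for the generalized method, for arbitrary positive parameters with
`t i ^ 2 ≤ T i`. -/
lemma gfpgm_energy {L : ℝ} (hL : 0 < L) {f : E → ℝ} {f' : E → E} {φ : E → ℝ}
    (hf : ConvexOn ℝ Set.univ f)
    (hgrad : ∀ z : E, HasFDerivAt f (innerSL ℝ (f' z)) z)
    (hLip : ∀ u v : E, ‖f' u - f' v‖ ≤ L * ‖u - v‖)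
    (hφ : ConvexOn ℝ Set.univ φ) {p : E → E}
    (hp : ∀ y : E, IsMinOn
      (fun z => f y + ⟪f' y, z - y⟫ + L / 2 * ‖z - y‖ ^ 2 + φ z) Set.univ (p y))
    (xs : E) {N : ℕ} {t T : ℕ → ℝ} (ht0 : t 0 = 1) (hT0 : T 0 = 1)
    (hTs : ∀ i, T (i + 1) = T i + t (i + 1))
    (hpos : ∀ i < N, 0 < t i) (hsq : ∀ i < N, t i ^ 2 ≤ T i)
    {x y : ℕ → E} (hy0 : y 0 = x 0)
    (hx : ∀ i < N, x (i + 1) = p (y i))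
    (hy : ∀ i, i + 1 < N → y (i + 1) = x (i + 1)
        + ((T i - t i) * t (i + 1) / (t i * T (i + 1))) • (x (i + 1) - x i)
        + ((t i ^ 2 - T i) * t (i + 1) / (t i * T (i + 1))) • (x (i + 1) - y i)) :
    ∀ i < N, T i * (f (x (i + 1)) + φ (x (i + 1)) - (f xs + φ xs)) ≤ L / 2 * ‖x 0 - xs‖ ^ 2 := by
  have hTpos : ∀ i < N, 0 < T i := fun i hi => lt_of_lt_of_le (pow_pos (hpos i hi) 2) (hsq i hi)
  have hstep : ∀ i < N, ∀ u : E, t i ≤ T i → t i • u = T i • y i - (T i - t i) • x i →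
      T i * (f (x (i + 1)) + φ (x (i + 1)) - (f xs + φ xs))
          + L / 2 * ‖u + t i • (x (i + 1) - y i) - xs‖ ^ 2
        ≤ (T i - t i) * (f (x i) + φ (x i) - (f xs + φ xs)) + L / 2 * ‖u - xs‖ ^ 2 := by
    intro i hi u hle hu
    have hq := hp (y i)
    rw [← hx i hi] at hq
    exact energy_step hL (hpos i hi) hle (hsq i hi) hu
      (prox_grad_ineq hf hgrad hLip hφ hq _) (prox_grad_ineq hf hgrad hLip hφ hq _)
  have main : ∀ i < N, ∃ u : E, t i • u = T i • y i - (T i - t i) • x i ∧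
      T i * (f (x (i + 1)) + φ (x (i + 1)) - (f xs + φ xs))
        + L / 2 * ‖u + t i • (x (i + 1) - y i) - xs‖ ^ 2 ≤ L / 2 * ‖x 0 - xs‖ ^ 2 := by
    intro i
    induction i with
    | zero =>
      intro hi
      have hu : t 0 • x 0 = T 0 • y 0 - (T 0 - t 0) • x 0 := by rw [hy0, ht0, hT0]; module
      refine ⟨x 0, hu, ?_⟩
      have := hstep 0 hi (x 0) (by rw [ht0, hT0]) hu
      simpa [ht0, hT0] using this
    | succ i ih =>
      intro hi
      have hi' : i < N := by omega
      obtain ⟨u, hu, hE⟩ := ih hi'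
      have h1 := (hpos i hi').ne'
      have h2 := (hTpos (i + 1) hi).ne'
      have hu' : t (i + 1) • (u + t i • (x (i + 1) - y i))
          = T (i + 1) • y (i + 1) - (T (i + 1) - t (i + 1)) • x (i + 1) := by
        have hu2 : u = (t i)⁻¹ • (T i • y i - (T i - t i) • x i) := by
          rw [← hu, smul_smul, inv_mul_cancel₀ h1, one_smul]
        rw [hy i hi, hu2]
        have c1 : T (i + 1) * ((T i - t i) * t (i + 1) / (t i * T (i + 1)))
            = t (i + 1) * (t i)⁻¹ * (T i - t i) := by field_simp
        have c2 : T (i + 1) * ((t i ^ 2 - T i) * t (i + 1) / (t i * T (i + 1)))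
            = t (i + 1) * t i - t (i + 1) * (t i)⁻¹ * T i := by field_simp
        rw [smul_add (T (i + 1)), smul_add (T (i + 1)), smul_smul (T (i + 1)),
          smul_smul (T (i + 1)), c1, c2]
        have c3 : t (i + 1) * (t i)⁻¹ * (T i - t i)
            = t (i + 1) * (t i)⁻¹ * T i - t (i + 1) := by field_simp
        have c4 : t (i + 1) • (t i)⁻¹ • (T i • y i - (T i - t i) • x i)
            = (t (i + 1) * (t i)⁻¹ * T i) • y i - (t (i + 1) * (t i)⁻¹ * (T i - t i)) • x i := by
          module
        rw [smul_add, c4, c3]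
        module
      refine ⟨_, hu', ?_⟩
      have := hstep (i + 1) hi _ (by rw [hTs]; linarith [hTpos i hi']) hu'
      have e : T (i + 1) - t (i + 1) = T i := by rw [hTs]; ring
      rw [e] at this
      linarith
  intro i hi
  obtain ⟨u, -, h⟩ := main i hi
  have : 0 ≤ L / 2 * ‖u + t i • (x (i + 1) - y i) - xs‖ ^ 2 := by positivity
  linarith

end ProximalGradient

section Parameters

variable {N : ℕ} {t T : ℕ → ℝ}

lemma opg_first_half (ht0 : t 0 = 1)
    (ht1 : ∀ i, i + 2 ≤ (N + 1) / 2 → t (i + 1) = (1 + Real.sqrt (1 + 4 * t i ^ 2)) / 2)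
    (hT0 : T 0 = 1) (hTs : ∀ i, T (i + 1) = T i + t (i + 1)) :
    ∀ i, i + 1 ≤ (N + 1) / 2 → ((i : ℝ) + 2) / 2 ≤ t i ∧ T i = t i ^ 2 := by
  intro i
  induction i with
  | zero => intro _; simp [ht0, hT0]
  | succ i ih =>
    intro hi
    obtain ⟨h1, h2⟩ := ih (by omega)
    have hsq := Real.sq_sqrt (show 0 ≤ 1 + 4 * t i ^ 2 by positivity)
    have hge : 2 * t i ≤ Real.sqrt (1 + 4 * t i ^ 2) := Real.le_sqrt_of_sq_le (by nlinarith)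
    have e := ht1 i (by omega)
    refine ⟨by rw [e]; push_cast; linarith, ?_⟩
    rw [hTs, h2, e]
    linarith

/-- On the second half, `T` dominates the square of half the switching value `⌈N / 2⌉ + 1`, plus
the partial sums of the arithmetic progression. -/
lemma opg_second_half (ht0 : t 0 = 1)
    (ht1 : ∀ i, i + 2 ≤ (N + 1) / 2 → t (i + 1) = (1 + Real.sqrt (1 + 4 * t i ^ 2)) / 2)
    (ht2 : ∀ i, (N + 1) / 2 ≤ i + 1 → i + 2 ≤ N → t (i + 1) = ((N : ℝ) - i) / 2)
    (hT0 : T 0 = 1) (hTs : ∀ i, T (i + 1) = T i + t (i + 1)) {k : ℕ}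
    (hk : k + 1 = (N + 1) / 2) :
    ∀ j, k + j + 1 ≤ N →
      ((k : ℝ) + 2) ^ 2 / 4 + ((N : ℝ) - k) * j / 2 - (j : ℝ) * (j - 1) / 4 ≤ T (k + j) := by
  intro j
  induction j with
  | zero =>
    intro _
    obtain ⟨h1, h2⟩ := opg_first_half ht0 ht1 hT0 hTs k hk.le
    have hk0 : (0 : ℝ) ≤ k := k.cast_nonneg
    simp only [add_zero, h2]
    push_cast
    nlinarith
  | succ j ih =>
    intro hj
    have h := ih (by omega)
    rw [← add_assoc, hTs, ht2 (k + j) (by omega) (by omega)]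
    push_cast
    linarith

lemma opg_parameters (hN : 1 ≤ N) (ht0 : t 0 = 1)
    (ht1 : ∀ i, i + 2 ≤ (N + 1) / 2 → t (i + 1) = (1 + Real.sqrt (1 + 4 * t i ^ 2)) / 2)
    (ht2 : ∀ i, (N + 1) / 2 ≤ i + 1 → i + 2 ≤ N → t (i + 1) = ((N : ℝ) - i) / 2)
    (hT0 : T 0 = 1) (hTs : ∀ i, T (i + 1) = T i + t (i + 1)) :
    (∀ i < N, 0 < t i ∧ t i ^ 2 ≤ T i) ∧ (N : ℝ) * (N + 4) / 8 ≤ T (N - 1) := by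
  obtain ⟨k, hk⟩ : ∃ k, k + 1 = (N + 1) / 2 := ⟨(N + 1) / 2 - 1, by omega⟩
  have hk0 : (0 : ℝ) ≤ k := k.cast_nonneg
  have hsecond := opg_second_half ht0 ht1 ht2 hT0 hTs hk
  constructor
  · intro i hi
    rcases Nat.lt_or_ge k i with hik | hik
    · obtain ⟨j, rfl⟩ : ∃ j, i = k + j + 1 := ⟨i - k - 1, by omega⟩
      have h := hsecond (j + 1) (by omega)
      rw [ht2 (k + j) (by omega) (by omega)]
      have a1 : (N : ℝ) ≤ 2 * k + 2 := by exact_mod_cast (by omega : N ≤ 2 * k + 2)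
      have a2 : (k : ℝ) + j + 2 ≤ N := by exact_mod_cast (by omega : k + j + 2 ≤ N)
      have j0 : (0 : ℝ) ≤ j := j.cast_nonneg
      rw [← add_assoc] at h
      push_cast at h ⊢
      refine ⟨by linarith, le_trans ?_ h⟩
      -- The second-half parameter is at most `(k + 2) / 2`; the progression adds a nonnegative sum.
      have b1 : ((N : ℝ) - (k + j)) ^ 2 ≤ (k + 2) ^ 2 :=
        pow_le_pow_left₀ (by linarith) (by linarith) 2
      have b2 : 0 ≤ ((j : ℝ) + 1) * (2 * (N - k) - j) := mul_nonneg (by linarith) (by linarith)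
      linarith
    · obtain ⟨h1, h2⟩ := opg_first_half ht0 ht1 hT0 hTs i (by omega)
      have : (0 : ℝ) ≤ i := i.cast_nonneg
      exact ⟨by linarith, h2.ge⟩
  · have h := hsecond (N - 1 - k) (by omega)
    rw [show k + (N - 1 - k) = N - 1 by omega] at h
    refine le_trans ?_ h
    rcases (by omega : N = 2 * k + 2 ∨ N = 2 * k + 1) with e | e
    · rw [show N - 1 - k = k + 1 by omega, e]
      push_cast
      nlinarith
    · rw [show N - 1 - k = k by omega, e]
      push_cast
      nlinarith

end Parameters

/-- FPGM-OPG (GFPGM with the FPGM-OPG parameters, where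
t_{i+1} follows the FISTA recursion for 0 ≤ i ≤ ⌈N/2⌉−2 and t_{i+1} = (N−i)/2 for
⌈N/2⌉−1 ≤ i ≤ N−2) satisfies F(x_N) − F(x_*) ≤ 4LR²/(N(N+4)) for N ≥ 1. -/
theorem fpgm_opg_cost_bound
    {E : Type*} [NormedAddCommGroup E] [InnerProductSpace ℝ E]
    (L : ℝ) (hL : 0 < L)
    (f : E → ℝ) (f' : E → E) (φ : E → ℝ)
    (hf : ConvexOn ℝ Set.univ f)
    (hgrad : ∀ z : E, HasFDerivAt f (innerSL ℝ (f' z)) z)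
    (hLip : ∀ u v : E, ‖f' u - f' v‖ ≤ L * ‖u - v‖)
    (hφ : ConvexOn ℝ Set.univ φ)
    (p : E → E)
    (hp : ∀ y : E, IsMinOn
      (fun z => f y + ⟪f' y, z - y⟫ + L / 2 * ‖z - y‖ ^ 2 + φ z) Set.univ (p y))
    (xs : E) (hxs : IsMinOn (fun z => f z + φ z) Set.univ xs)
    (R : ℝ) (hR0 : 0 ≤ R)
    (N : ℕ) (hN : 1 ≤ N)
    (t T : ℕ → ℝ) (ht0 : t 0 = 1)
    (ht1 : ∀ i, i + 2 ≤ (N + 1) / 2 → t (i + 1) = (1 + Real.sqrt (1 + 4 * t i ^ 2)) / 2)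
    (ht2 : ∀ i, (N + 1) / 2 ≤ i + 1 → i + 2 ≤ N → t (i + 1) = ((N : ℝ) - i) / 2)
    (hT : ∀ i, T i = ∑ l ∈ Finset.range (i + 1), t l)
    (x y : ℕ → E)
    (hy0 : y 0 = x 0)
    (hx : ∀ i < N, x (i + 1) = p (y i))
    (hy : ∀ i, i + 1 < N → y (i + 1) = x (i + 1)
        + ((T i - t i) * t (i + 1) / (t i * T (i + 1))) • (x (i + 1) - x i)
        + ((t i ^ 2 - T i) * t (i + 1) / (t i * T (i + 1))) • (x (i + 1) - y i))
    (hR : ‖x 0 - xs‖ ≤ R) :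
    f (x N) + φ (x N) - (f xs + φ xs) ≤ 4 * L * R ^ 2 / ((N : ℝ) * ((N : ℝ) + 4)) := by
  have hT0 : T 0 = 1 := by simp [hT, ht0]
  have hTs : ∀ i, T (i + 1) = T i + t (i + 1) := fun i => by
    rw [hT, hT, Finset.sum_range_succ]
  obtain ⟨hpar, hTN⟩ := opg_parameters hN ht0 ht1 ht2 hT0 hTs
  have h := gfpgm_energy hL hf hgrad hLip hφ hp xs ht0 hT0 hTs (fun i hi => (hpar i hi).1)
    (fun i hi => (hpar i hi).2) hy0 hx hy (N - 1) (by omega)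
  rw [Nat.sub_add_cancel hN] at h
  have hmin : 0 ≤ f (x N) + φ (x N) - (f xs + φ xs) := sub_nonneg.2 (hxs (Set.mem_univ (x N)))
  have hN' : (0 : ℝ) < N := by exact_mod_cast hN
  have hR2 : ‖x 0 - xs‖ ^ 2 ≤ R ^ 2 := pow_le_pow_left₀ (norm_nonneg _) hR 2
  have h1 := mul_le_mul_of_nonneg_right hTN hmin
  have h2 := mul_le_mul_of_nonneg_left hR2 (half_pos hL).le
  rw [le_div_iff₀ (by positivity)]
  linarith
end
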